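/- The derivation module D(𝒜₂₃₉) of the central hyperplane arrangement 𝒜₂₃₉ in ℂ⁴ with defining equation Q₂₃₉ = x·y·z·w·(x+y+z)·(x+y+w)·(x+z+w)·(y+z+w) is not a free module over S = ℂ[x,y,z,w]. -/

import Mathlib

open MvPolynomial

noncomputable section

/-- The polynomial ring `S = ℂ[x,y,z,w]`, with `x = X 0`, `y = X 1`, `z = X 2`, `w = X 3`. -/
abbrev S4 : Type := MvPolynomial (Fin 4) ℂ

/-- The linear form `c₀·x + c₁·y + c₂·z + c₃·w` with coefficient vector `c`. -/
noncomputable def linForm (c : Fin 4 → ℂ) : S4 := ∑ i, C (c i) * X i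

/-- A polynomial derivation `θ = a₁∂ₓ + a₂∂_y + a₃∂_z + a₄∂_w` of `S` is identified with
its coefficient tuple `a : Fin 4 → S`; the linear map `derMap f` sends `a` to `θ(f)`. -/
noncomputable def derMap (f : S4) : (Fin 4 → S4) →ₗ[S4] S4 where
  toFun a := ∑ i, a i * pderiv i f
  map_add' a b := by simp [add_mul, Finset.sum_add_distrib]
  map_smul' c a := by simp [Finset.mul_sum, mul_assoc]

/-- The derivation module `D(𝒜)` of the central arrangement whose hyperplanes are the kernels
of the linear forms `linForm (α H)`: all derivations `θ` with `θ(α_H) ∈ S·α_H` for every `H`. -/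
noncomputable def derivModule {ι : Type} (α : ι → (Fin 4 → ℂ)) :
    Submodule S4 (Fin 4 → S4) :=
  ⨅ H, Submodule.comap (derMap (linForm (α H))) (Ideal.span {linForm (α H)})

end

/-- The coefficient vectors of the eight linear factors of Q = xyzw(x+y+z)(x+y+w)(x+z+w)(y+z+w), defining the rigid Cynk–Szemberg octic arrangement 𝒜₂₃₉ ⊂ ℙ³. -/
noncomputable def A239 : Fin 8 → (Fin 4 → ℂ) :=
  ![![1, 0, 0, 0],
    ![0, 1, 0, 0],
    ![0, 0, 1, 0],
    ![0, 0, 0, 1],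
    ![1, 1, 1, 0],
    ![1, 1, 0, 1],
    ![1, 0, 1, 1],
    ![0, 1, 1, 1]]

/-- The forms of 𝒜₂₃₉ vanishing at the point `(0,0,0,1)`: four generic forms in `x, y, z`. -/
noncomputable def localForms : Fin 4 → (Fin 4 → ℂ) :=
  ![![1, 0, 0, 0], ![0, 1, 0, 0], ![0, 0, 1, 0], ![1, 1, 1, 0]]

/-- Evaluation at the point `(0,0,0,1)`. -/
noncomputable def evalPt : S4 →+* ℂ := MvPolynomial.eval ![0, 0, 0, 1]

/-- The product of the forms of 𝒜₂₃₉ that do not vanish at `(0,0,0,1)`. -/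
noncomputable def unitFactor : S4 :=
  linForm ![0, 0, 0, 1] * linForm ![1, 1, 0, 1] * linForm ![1, 0, 1, 1] * linForm ![0, 1, 1, 1]

instance : RingHomSurjective evalPt :=
  ⟨fun c => ⟨C c, by simp [evalPt]⟩⟩

lemma mem_derivModule {ι : Type} {α : ι → (Fin 4 → ℂ)} {θ : Fin 4 → S4} :
    θ ∈ derivModule α ↔ ∀ H, linForm (α H) ∣ derMap (linForm (α H)) θ := by
  simp [derivModule, Submodule.mem_iInf, Ideal.mem_span_singleton]

lemma derMap_linForm (c : Fin 4 → ℂ) (θ : Fin 4 → S4) :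
    derMap (linForm c) θ = ∑ i, C (c i) * θ i := by
  simp [derMap, linForm, Fin.sum_univ_four, pderiv_X, Pi.single_apply]
  ring

lemma mem_localForms {θ : Fin 4 → S4} :
    θ ∈ derivModule localForms ↔
      X 0 ∣ θ 0 ∧ X 1 ∣ θ 1 ∧ X 2 ∣ θ 2 ∧ (X 0 + X 1 + X 2) ∣ θ 0 + θ 1 + θ 2 := by
  simp only [mem_derivModule, derMap_linForm]
  simp [Fin.forall_fin_succ, localForms, linForm, Fin.sum_univ_four]

lemma derivModule_A239_le : derivModule A239 ≤ derivModule localForms := by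
  intro θ h
  rw [mem_derivModule] at h ⊢
  intro H
  fin_cases H
  · exact h 0
  · exact h 1
  · exact h 2
  · exact h 4

lemma unitFactor_smul_mem {θ : Fin 4 → S4} (h : θ ∈ derivModule localForms) :
    unitFactor • θ ∈ derivModule A239 := by
  rw [mem_derivModule] at h ⊢
  intro H
  rw [map_smul, smul_eq_mul]
  fin_cases H
  · exact (h 0).mul_left _
  · exact (h 1).mul_left _
  · exact (h 2).mul_left _
  · exact Dvd.dvd.mul_right ⟨linForm ![1, 1, 0, 1] * linForm ![1, 0, 1, 1] * linForm ![0, 1, 1, 1],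
      by simp only [unitFactor, A239]; simp; ring⟩ _
  · exact (h 3).mul_left _
  · exact Dvd.dvd.mul_right ⟨linForm ![0, 0, 0, 1] * linForm ![1, 0, 1, 1] * linForm ![0, 1, 1, 1],
      by simp only [unitFactor, A239]; simp; ring⟩ _
  · exact Dvd.dvd.mul_right ⟨linForm ![0, 0, 0, 1] * linForm ![1, 1, 0, 1] * linForm ![0, 1, 1, 1],
      by simp only [unitFactor, A239]; simp; ring⟩ _
  · exact Dvd.dvd.mul_right ⟨linForm ![0, 0, 0, 1] * linForm ![1, 1, 0, 1] * linForm ![1, 0, 1, 1],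
      by simp only [unitFactor, A239]; simp; ring⟩ _

lemma evalPt_unitFactor : evalPt unitFactor = 1 := by
  simp [unitFactor, evalPt, linForm, Fin.sum_univ_four]

/-- Five functionals on derivations, read off from the Taylor expansion at `(0,0,0,1)`. -/
noncomputable def taylorCoeffs (θ : Fin 4 → S4) : Fin 5 → ℂ :=
  ![evalPt (pderiv 0 (θ 0)),
    evalPt (θ 3),
    evalPt (pderiv 0 (pderiv 1 (θ 0))) - 1 / 2 * evalPt (pderiv 1 (pderiv 1 (θ 1))),
    evalPt (pderiv 0 (pderiv 2 (θ 0))) - 1 / 2 * evalPt (pderiv 2 (pderiv 2 (θ 2))),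
    evalPt (pderiv 1 (pderiv 2 (θ 1))) - 1 / 2 * evalPt (pderiv 2 (pderiv 2 (θ 2)))]

lemma taylorCoeffs_add (θ η : Fin 4 → S4) :
    taylorCoeffs (θ + η) = taylorCoeffs θ + taylorCoeffs η := by
  ext i
  fin_cases i <;> simp [taylorCoeffs] <;> ring

lemma taylorCoeffs_smul {θ : Fin 4 → S4} (h : θ ∈ derivModule localForms) (f : S4) :
    taylorCoeffs (f • θ) = evalPt f • taylorCoeffs θ := by
  obtain ⟨⟨a, ha⟩, ⟨b, hb⟩, ⟨c, hc⟩, ⟨g, hg⟩⟩ := mem_localForms.1 h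
  have e0 : evalPt (X 0) = 0 := by simp [evalPt]
  have e1 : evalPt (X 1) = 0 := by simp [evalPt]
  have e2 : evalPt (X 2) = 0 := by simp [evalPt]
  rw [ha, hb, hc] at hg
  have ga : evalPt a = evalPt g := by
    simpa [pderiv_X, Pi.single_apply, e0, e1, e2] using congrArg (fun q => evalPt (pderiv 0 q)) hg
  have gb : evalPt b = evalPt g := by
    simpa [pderiv_X, Pi.single_apply, e0, e1, e2] using congrArg (fun q => evalPt (pderiv 1 q)) hg
  have gc : evalPt c = evalPt g := by
    simpa [pderiv_X, Pi.single_apply, e0, e1, e2] using congrArg (fun q => evalPt (pderiv 2 q)) hg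
  ext i
  fin_cases i <;>
    simp [taylorCoeffs, ha, hb, hc, pderiv_X, e0, e1, e2, ga, gb, gc] <;> ring

/-- The functionals `taylorCoeffs` as a map of `S`-modules, `S` acting on `ℂ⁵` through `evalPt`. -/
noncomputable def taylorMap : derivModule A239 →ₛₗ[evalPt] (Fin 5 → ℂ) where
  toFun θ := taylorCoeffs θ
  map_add' θ η := taylorCoeffs_add θ η
  map_smul' f θ := taylorCoeffs_smul (derivModule_A239_le θ.2) f

lemma taylorMap_surjective : Function.Surjective taylorMap := by
  intro v
  let θ : Fin 4 → S4 :=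
    ![X 0 * (C (v 0) + C (v 2) * X 1 + C (v 3) * X 2),
      X 1 * (C (v 0) - C (v 2) * X 0 + C (v 4) * X 2),
      X 2 * (C (v 0) - C (v 3) * X 0 - C (v 4) * X 1),
      C (v 1)]
  have hθ : θ ∈ derivModule localForms :=
    mem_localForms.2 ⟨⟨_, rfl⟩, ⟨_, rfl⟩, ⟨_, rfl⟩, ⟨C (v 0), by simp [θ]; ring⟩⟩
  refine ⟨⟨unitFactor • θ, unitFactor_smul_mem hθ⟩, ?_⟩
  change taylorCoeffs (unitFactor • θ) = v
  rw [taylorCoeffs_smul hθ, evalPt_unitFactor, one_smul]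
  ext i
  fin_cases i <;> simp [taylorCoeffs, θ, evalPt, pderiv_X]

/-- The derivation module of 𝒜₂₃₉ is not a free `S`-module. -/
theorem not_free_A239 : ¬ Module.Free S4 ↥(derivModule A239) := by
  intro hfree
  have hrank : Module.finrank S4 (derivModule A239) ≤ 4 := by
    simpa using Submodule.finrank_le (derivModule A239)
  let b := Module.finBasis S4 (derivModule A239)
  have hspan : Submodule.span ℂ (Set.range (taylorMap ∘ b)) = ⊤ := by
    rw [Set.range_comp, ← Submodule.map_span, b.span_eq, Submodule.map_top,
      LinearMap.range_eq_top.2 taylorMap_surjective]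
  have hcard := finrank_range_le_card (R := ℂ) (taylorMap ∘ b)
  rw [Set.finrank, hspan, finrank_top] at hcard
  simp at hcard
  omega
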